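/- Let G = {J_1,...,J_n} be a finite set of two-stage jobs with dual job set G^d. If the sequence S = ⟨J_1,...,J_n⟩ achieves the minimum completion time on a single two-stage flowshop among all orderings of G, then the dual schedule S^d = ⟨J_n^d,...,J_1^d⟩ achieves the minimum completion time among all orderings of G^d. -/

import Mathlib

/-- Adding a job `(r, t)` to a flowshop with status `(ρ, τ)` (completion times of the
R-processor and T-processor) yields the status `(ρ + r, max (ρ + r) τ + t)`. -/
def stepFS (s j : ℝ × ℝ) : ℝ × ℝ := (s.1 + j.1, max (s.1 + j.1) s.2 + j.2)

/-- The status `(ρ, τ)` of a two-stage flowshop after processing a sequence of two-stage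
jobs, starting from `(0, 0)`. -/
def statusFS (L : List (ℝ × ℝ)) : ℝ × ℝ := L.foldl stepFS (0, 0)

/-- The completion time of a sequence of two-stage jobs on a single two-stage flowshop. -/
def compFS (L : List (ℝ × ℝ)) : ℝ := (statusFS L).2

/-- The dual job of a two-stage job `(r, t)` is the job `(t, r)`. -/
def dualJob (j : ℝ × ℝ) : ℝ × ℝ := (j.2, j.1)

theorem foldl_fst_aux (L : List (ℝ × ℝ)) : ∀ s : ℝ × ℝ,
    (L.foldl stepFS s).1 = s.1 + (L.map Prod.fst).sum := by
  induction L with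
  | nil => intro s; simp
  | cons j L ih =>
    intro s
    rw [List.foldl_cons, ih]
    simp [stepFS, add_assoc]

theorem foldl_snd_aux (L : List (ℝ × ℝ)) : (∀ j ∈ L, 0 ≤ j.1 ∧ 0 ≤ j.2) →
    ∀ s : ℝ × ℝ, s.1 ≤ s.2 →
    (L.foldl stepFS s).2 = max (s.2 + (L.map Prod.snd).sum) (s.1 + compFS L) := by
  induction L with
  | nil => intro _ s hs; simp [compFS, statusFS, hs]
  | cons j L ih =>
    intro hL s hs
    have hj := hL j (by simp)
    have hL' : ∀ j ∈ L, 0 ≤ j.1 ∧ 0 ≤ j.2 := fun k hk => hL k (by simp [hk])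
    have key : ∀ s : ℝ × ℝ, (stepFS s j).1 ≤ (stepFS s j).2 := by
      intro s
      simp only [stepFS]
      have := le_max_left (s.1 + j.1) s.2
      linarith [hj.2]
    have h0 : compFS (j :: L) = (L.foldl stepFS (stepFS (0, 0) j)).2 := rfl
    rw [h0, List.foldl_cons, ih hL' _ (key _), ih hL' _ (key _)]
    simp only [stepFS, List.map_cons, List.sum_cons, zero_add, max_eq_left hj.1]
    grind

theorem compFS_dual (L : List (ℝ × ℝ)) : (∀ j ∈ L, 0 ≤ j.1 ∧ 0 ≤ j.2) →
    compFS ((L.map dualJob).reverse) = compFS L := by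
  induction L with
  | nil => intro _; rfl
  | cons j L ih =>
    intro hL
    have hj := hL j (by simp)
    have hL' : ∀ j ∈ L, 0 ≤ j.1 ∧ 0 ≤ j.2 := fun k hk => hL k (by simp [hk])
    have ih := ih hL'
    have h0 : compFS (j :: L) = (L.foldl stepFS (stepFS (0, 0) j)).2 := rfl
    have h1 : (stepFS (0, 0) j).1 ≤ (stepFS (0, 0) j).2 := by
      simp [stepFS, hj.1, hj.2]
    rw [h0, foldl_snd_aux L hL' _ h1]
    have h2 : compFS (((j :: L).map dualJob).reverse)
        = (stepFS (statusFS ((L.map dualJob).reverse)) (dualJob j)).2 := by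
      simp [compFS, statusFS, List.foldl_append]
    have h3 : (statusFS ((L.map dualJob).reverse)).1 = (L.map Prod.snd).sum := by
      unfold statusFS
      rw [foldl_fst_aux, List.map_reverse, List.sum_reverse, List.map_map]
      simp only [zero_add]
      rfl
    have h4 : (statusFS ((L.map dualJob).reverse)).2 = compFS L := ih
    rw [h2]
    simp only [stepFS, h3, h4, dualJob, zero_add, max_eq_left hj.1]
    grind

/-- If a sequence `L` achieves the minimum completion time on a single two-stage flowshop
among all orderings of its job set, then the reversed dual sequence achieves the minimum
completion time among all orderings of the dual job set. -/
theorem stmt5 (L : List (ℝ × ℝ)) (hL : ∀ j ∈ L, 0 ≤ j.1 ∧ 0 ≤ j.2)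
    (hopt : ∀ L' : List (ℝ × ℝ), L'.Perm L → compFS L ≤ compFS L') :
    ∀ L' : List (ℝ × ℝ), L'.Perm (L.map dualJob) →
      compFS ((L.map dualJob).reverse) ≤ compFS L' := by
  intro L' hp
  have hd : dualJob ∘ dualJob = id := rfl
  have hL' : ∀ j ∈ L', 0 ≤ j.1 ∧ 0 ≤ j.2 := by
    intro j hj
    obtain ⟨k, hk, rfl⟩ := List.mem_map.1 (hp.mem_iff.1 hj)
    exact (hL k hk).symm
  rw [compFS_dual L hL, ← compFS_dual L' hL']
  apply hopt
  have h := hp.map dualJob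
  rw [List.map_map, hd, List.map_id] at h
  exact (List.reverse_perm _).trans h
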